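/- For every permutation w of {1,…,n} and every δ ∈ GPDs(w), the number of cross tiles of δ plus the number of bump tiles of δ equals the number of blank tiles of δ. -/

import Mathlib

open scoped Classical

namespace GPDpaper

/-- Raw data of a pipe-filling of the `n × n` grid: `d.1 i j` is the (optional) pipe label on
the vertical edge at row `i`, West of column `j` (so `d.1 i 0` is on the West boundary and
`d.1 i (Fin.last n)` on the East boundary); `d.2 i j` is the label on the horizontal edge
North of row `i` in column `j` (so `d.2 0 j` is on the North boundary and
`d.2 (Fin.last n) j` on the South boundary).  Rows are numbered from the top. -/
abbrev Pipes (n : ℕ) :=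
  (Fin n → Fin (n+1) → Option (Fin n)) × (Fin (n+1) → Fin n → Option (Fin n))

variable {n : ℕ}

/-- Label on the West edge of square `(i,j)`. -/
def We (d : Pipes n) (i j : Fin n) : Option (Fin n) := d.1 i j.castSucc
/-- Label on the East edge of square `(i,j)`. -/
def Ea (d : Pipes n) (i j : Fin n) : Option (Fin n) := d.1 i j.succ
/-- Label on the North edge of square `(i,j)`. -/
def No (d : Pipes n) (i j : Fin n) : Option (Fin n) := d.2 i.castSucc j
/-- Label on the South edge of square `(i,j)`. -/
def So (d : Pipes n) (i j : Fin n) : Option (Fin n) := d.2 i.succ j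

/-- The local condition making `d` a generic pipe dream: at each square, the pair of labels
leaving through the East and North edges is either `(W,S)` (cross/horizontal/vertical/blank
tile) or `(S,W)` (bump/elbow/blank tile); moreover two edges of the same square never carry
the same pipe label. -/
def IsValid (d : Pipes n) : Prop :=
  ∀ i j : Fin n,
    ((Ea d i j, No d i j) = (We d i j, So d i j) ∨
     (Ea d i j, No d i j) = (So d i j, We d i j)) ∧
    (We d i j = So d i j → We d i j = none)

/-- The seven generic pipe dream tiles. -/
inductive Tile where
  | cross | bump | nw | se | horiz | vert | blank
deriving DecidableEq

/-- The tile of a pipe-filling at square `(i,j)`. -/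
def tile (d : Pipes n) (i j : Fin n) : Tile :=
  match We d i j, So d i j with
  | some a, some _ => if Ea d i j = some a then .cross else .bump
  | some _, none => if No d i j = none then .horiz else .nw
  | none, some _ => if No d i j = none then .se else .vert
  | none, none => .blank

/-- `d` is a generic pipe dream for the permutation `w`: it is locally valid, the pipe
entering the West boundary in row `i` is labelled `i`, no pipes meet the East and South
boundaries, and the pipe exiting the North boundary in column `j` is labelled `w⁻¹(j)`. -/
def IsGPDof (w : Equiv.Perm (Fin n)) (d : Pipes n) : Prop :=
  IsValid d ∧
  (∀ i : Fin n, d.1 i 0 = some i) ∧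
  (∀ i : Fin n, d.1 i (Fin.last n) = none) ∧
  (∀ j : Fin n, d.2 (Fin.last n) j = none) ∧
  (∀ j : Fin n, d.2 0 j = some (w.symm j))

/-- Number of tiles of `d` of a given type. -/
noncomputable def tileCount (d : Pipes n) (t : Tile) : ℕ :=
  (Finset.univ.filter (fun p : Fin n × Fin n => tile d p.1 p.2 = t)).card

/-- The pipes labelled `p` and `q` cross at the tile `(i,j)`. -/
def CrossesAt (d : Pipes n) (p q : Fin n) (i j : Fin n) : Prop :=
  tile d i j = .cross ∧
  ((We d i j = some p ∧ So d i j = some q) ∨ (We d i j = some q ∧ So d i j = some p))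

/-- The number of tiles at which the pipes labelled `p` and `q` cross. -/
noncomputable def crossCount (d : Pipes n) (p q : Fin n) : ℕ :=
  (Finset.univ.filter (fun ij : Fin n × Fin n => CrossesAt d p q ij.1 ij.2)).card

/-- No two pipes of `d` cross each other at more than one tile. -/
def NoDoubleCross (d : Pipes n) : Prop := ∀ p q : Fin n, crossCount d p q ≤ 1

/-- Number of inversions (Coxeter length) of a permutation. -/
def invCount (w : Equiv.Perm (Fin n)) : ℕ :=
  (Finset.univ.filter (fun p : Fin n × Fin n => p.1 < p.2 ∧ w p.2 < w p.1)).card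

/-- Classic pipe dream (in 1-indexed terms: crosses and bumps for `i+j ≤ n`, NW-elbows on the
antidiagonal `i+j = n+1`, blanks below, and no two pipes crossing twice). -/
def IsClassic (d : Pipes n) : Prop :=
  (∀ i j : Fin n, (i : ℕ) + (j : ℕ) + 2 ≤ n → tile d i j = .cross ∨ tile d i j = .bump) ∧
  (∀ i j : Fin n, (i : ℕ) + (j : ℕ) + 2 = n + 1 → tile d i j = .nw) ∧
  (∀ i j : Fin n, (i : ℕ) + (j : ℕ) + 2 > n + 1 → tile d i j = .blank) ∧
  NoDoubleCross d

/-- Bumpless-reduced: no bump tiles and no two pipes crossing twice. -/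
def IsBumplessReduced (d : Pipes n) : Prop :=
  (∀ i j : Fin n, tile d i j ≠ .bump) ∧ NoDoubleCross d


/-- Occupancy of an edge. -/
def occ (o : Option (Fin n)) : ℤ := if o = none then 0 else 1

theorem tele_aux {n : ℕ} (y : Fin (n+1) → ℤ) :
    ∑ i : Fin n, y i.castSucc - ∑ i : Fin n, y i.succ = y 0 - y (Fin.last n) := by
  have h1 := Fin.sum_univ_castSucc y
  have h2 := Fin.sum_univ_succ y
  linarith

theorem arith_aux (c : ℤ) (m : ℕ) :
    ∑ i : Fin m, (2 * c - 1 - 2 * (i : ℤ)) = 2 * c * m - m * m := by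
  induction m with
  | zero => simp
  | succ k ih =>
    rw [Fin.sum_univ_castSucc]
    simp only [Fin.val_castSucc, Fin.val_last, ih]
    push_cast
    ring

theorem conserve_aux {n : ℕ} (d : Pipes n) (h : IsValid d) (i j : Fin n) :
    occ (Ea d i j) + occ (No d i j) = occ (We d i j) + occ (So d i j) := by
  rcases (h i j).1 with h | h <;> simp only [Prod.mk.injEq] at h <;> rw [h.1, h.2]
  ring

theorem tile_aux {n : ℕ} (d : Pipes n) (i j : Fin n) :
    (if tile d i j = .cross then (1 : ℤ) else 0) + (if tile d i j = .bump then 1 else 0)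
      - (if tile d i j = .blank then 1 else 0) = occ (We d i j) + occ (So d i j) - 1 := by
  unfold tile
  rcases hW : We d i j with _ | a <;> rcases hS : So d i j with _ | b <;>
    simp only [occ] <;> split_ifs <;> simp_all

theorem count_aux {n : ℕ} (d : Pipes n) (t : Tile) :
    (tileCount d t : ℤ) = ∑ i : Fin n, ∑ j : Fin n, if tile d i j = t then (1 : ℤ) else 0 := by
  rw [← Fintype.sum_prod_type' (f := fun i j => if tile d i j = t then (1 : ℤ) else 0)]
  simp [tileCount]

theorem statement6 {n : ℕ} (hn : 1 ≤ n) (w : Equiv.Perm (Fin n)) (d : Pipes n)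
    (hd : IsGPDof w d) :
    tileCount d .cross + tileCount d .bump = tileCount d .blank := by
  obtain ⟨hv, hW, hE, hS, hN⟩ := hd
  have hX : ∀ j : Fin (n+1), ∑ i : Fin n, occ (d.1 i j) = (n : ℤ) - (j : ℕ) := by
    intro j
    induction j using Fin.induction with
    | zero => simp [hW, occ]
    | succ j ih =>
      have h1 := Finset.sum_congr rfl (fun i (_ : i ∈ Finset.univ) => conserve_aux d hv i j)
      simp only [Finset.sum_add_distrib, Ea, We, No, So] at h1
      have h2 := tele_aux (fun i => occ (d.2 i j))
      simp only [hN, hS] at h2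
      simp only [occ, reduceCtorEq, if_true, if_false] at h1 h2 ih ⊢
      simp only [Fin.val_castSucc, Fin.val_succ] at ih ⊢
      push_cast
      linarith
  have hY : ∀ i : Fin (n+1), ∑ j : Fin n, occ (d.2 i j) = (n : ℤ) - (i : ℕ) := by
    intro i
    induction i using Fin.induction with
    | zero => simp [hN, occ]
    | succ i ih =>
      have h1 := Finset.sum_congr rfl (fun j (_ : j ∈ Finset.univ) => conserve_aux d hv i j)
      simp only [Finset.sum_add_distrib, Ea, We, No, So] at h1
      have h2 := tele_aux (fun j => occ (d.1 i j))
      simp only [hW, hE] at h2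
      simp only [occ, reduceCtorEq, if_true, if_false] at h1 h2 ih ⊢
      simp only [Fin.val_castSucc, Fin.val_succ] at ih ⊢
      push_cast
      linarith
  have key : (tileCount d .cross : ℤ) + tileCount d .bump - tileCount d .blank = 0 := by
    rw [count_aux, count_aux, count_aux]
    simp only [← Finset.sum_add_distrib, ← Finset.sum_sub_distrib, tile_aux]
    simp only [Finset.sum_add_distrib, Finset.sum_sub_distrib]
    rw [Finset.sum_comm]
    simp only [We, So, hX, hY]
    have h := arith_aux n n
    have h3 : ∑ i : Fin n, (2 * (n : ℤ) - 1 - 2 * (i : ℤ))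
        = ∑ j : Fin n, ((n : ℤ) - ((j.castSucc : Fin (n+1)) : ℕ))
          + ∑ i : Fin n, ((n : ℤ) - ((i.succ : Fin (n+1)) : ℕ)) := by
      rw [← Finset.sum_add_distrib]
      refine Finset.sum_congr rfl fun i _ => ?_
      simp only [Fin.val_castSucc, Fin.val_succ]
      push_cast
      ring
    rw [← h3, h]
    simp
    ring
  omega

end GPDpaper
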